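/- For every real s > 1 and every natural number x, the moments of the Geometric mixing distribution satisfy the recursion ∫₀¹ p^{x+1} f(p) dp = ∫₀¹ p^x f(p) dp − (x+1)^(-s)/ζ(s), where f(p) = (-ln p)^(s-1)/(ζ(s)Γ(s)(1-p)); equivalently, E[p^{x+1}] = E[p^x] − (x+1)^(-s)/ζ(s) and E[p^0] = 1. -/

import Mathlib

open MeasureTheory

/-- The Riemann zeta function for real `s > 1`, defined as `∑_{x=0}^∞ (x+1)^(-s)`. -/
noncomputable def zetaS (s : ℝ) : ℝ := ∑' x : ℕ, ((x : ℝ) + 1) ^ (-s)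

/-!
Substituting `p = exp (-t)` turns `∫₀¹ p^y (-log p)^(s-1) dp` into a Gamma integral with value
`Γ(s) (y+1)^(-s)`. Expanding `1/(1-p)` as a geometric series and integrating term by term, the
`x`-th moment of the mixing density is the tail `∑_{n≥0} (x+n+1)^(-s)` of the zeta series, divided
by `ζ(s)`. Passing from `x` to `x + 1` removes the leading term of that tail, and the full series
at `x = 0` is `ζ(s)` itself.
-/

section

open Set

theorem image_exp_neg_Ioi (a : ℝ) :
    (fun t : ℝ ↦ Real.exp (-t)) '' Ioi a = Ioo 0 (Real.exp (-a)) := by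
  rw [← Real.image_exp_Iio, ← image_neg_Ioi, image_image]

theorem setIntegral_Ioo_zero_exp_neg {E : Type*} [NormedAddCommGroup E] [NormedSpace ℝ E]
    (a : ℝ) (g : ℝ → E) :
    ∫ p in Ioo 0 (Real.exp (-a)), g p = ∫ t in Ioi a, Real.exp (-t) • g (Real.exp (-t)) := by
  have hderiv (t : ℝ) : HasDerivAt (fun t : ℝ ↦ Real.exp (-t)) (-Real.exp (-t)) t := by
    simpa using (hasDerivAt_neg t).exp
  have hanti : Antitone fun t : ℝ ↦ Real.exp (-t) := fun _ _ h ↦ Real.exp_monotone (neg_le_neg h)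
  rw [← image_exp_neg_Ioi, integral_image_eq_integral_deriv_smul_of_antitoneOn measurableSet_Ioi
    (fun t _ ↦ (hderiv t).hasDerivWithinAt) (hanti.antitoneOn _)]
  simp only [neg_neg]

theorem integral_rpow_mul_neg_log_rpow {s y : ℝ} (hs : 0 < s) (hy : -1 < y) :
    ∫ p in Ioo (0 : ℝ) 1, p ^ y * (-Real.log p) ^ (s - 1) = Real.Gamma s * (y + 1) ^ (-s) := by
  have hy' : 0 < y + 1 := by linarith
  calc ∫ p in Ioo (0 : ℝ) 1, p ^ y * (-Real.log p) ^ (s - 1)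
    _ = ∫ t in Ioi 0, Real.exp (-t) *
          (Real.exp (-t) ^ y * (-Real.log (Real.exp (-t))) ^ (s - 1)) := by
      simpa using setIntegral_Ioo_zero_exp_neg 0 fun p ↦ p ^ y * (-Real.log p) ^ (s - 1)
    _ = ∫ t in Ioi 0, t ^ (s - 1) * Real.exp (-((y + 1) * t)) := by
      congr with t
      rw [Real.log_exp, neg_neg, ← mul_assoc, ← Real.exp_mul, ← Real.exp_add, mul_comm]
      ring_nf
    _ = Real.Gamma s * (y + 1) ^ (-s) := by
      rw [Real.integral_rpow_mul_exp_neg_mul_Ioi hs hy', one_div, Real.inv_rpow hy'.le,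
        ← Real.rpow_neg hy'.le, mul_comm]

theorem integrableOn_rpow_mul_neg_log_rpow {s y : ℝ} (hs : 0 < s) (hy : -1 < y) :
    IntegrableOn (fun p : ℝ ↦ p ^ y * (-Real.log p) ^ (s - 1)) (Ioo 0 1) := by
  refine Integrable.of_integral_ne_zero ?_
  rw [integral_rpow_mul_neg_log_rpow hs hy]
  exact (mul_pos (Real.Gamma_pos_of_pos hs) (Real.rpow_pos_of_pos (by linarith) _)).ne'

theorem summable_add_natCast_add_one_rpow_neg {s y : ℝ} (hs : 1 < s) (hy : -1 < y) :
    Summable fun n : ℕ ↦ (y + n + 1) ^ (-s) := by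
  refine ((Real.summable_one_div_nat_add_rpow (y + 1) s).2 hs).congr fun n ↦ ?_
  have hn : 0 < y + n + 1 := by linarith [n.cast_nonneg (α := ℝ)]
  rw [show (n : ℝ) + (y + 1) = y + n + 1 by ring, abs_of_pos hn, Real.rpow_neg hn.le, one_div]

theorem hasSum_rpow_add_natCast {p : ℝ} (hp : p ∈ Ioo (0 : ℝ) 1) (y : ℝ) :
    HasSum (fun n : ℕ ↦ p ^ (y + n)) (p ^ y / (1 - p)) := by
  simpa only [Real.rpow_add_natCast hp.1.ne', div_eq_mul_inv] using
    (hasSum_geometric_of_lt_one hp.1.le hp.2).mul_left (p ^ y)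

theorem hasSum_integral_rpow_div_one_sub_mul_neg_log_rpow {s y : ℝ} (hs : 1 < s) (hy : -1 < y) :
    HasSum (fun n : ℕ ↦ Real.Gamma s * (y + n + 1) ^ (-s))
      (∫ p in Ioo (0 : ℝ) 1, p ^ y / (1 - p) * (-Real.log p) ^ (s - 1)) := by
  have hs' : 0 < s := by linarith
  have hyn (n : ℕ) : -1 < y + n := by linarith [n.cast_nonneg (α := ℝ)]
  have hnorm (n : ℕ) : ∫ p in Ioo (0 : ℝ) 1, ‖p ^ (y + n) * (-Real.log p) ^ (s - 1)‖ =
      Real.Gamma s * (y + n + 1) ^ (-s) := by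
    rw [← integral_rpow_mul_neg_log_rpow hs' (hyn n)]
    refine setIntegral_congr_fun measurableSet_Ioo fun p hp ↦ Real.norm_of_nonneg ?_
    have hlog : 0 ≤ -Real.log p := neg_nonneg.2 (Real.log_nonpos hp.1.le hp.2.le)
    exact mul_nonneg (Real.rpow_nonneg hp.1.le _) (Real.rpow_nonneg hlog _)
  have hsum : HasSum (fun n : ℕ ↦ ∫ p in Ioo (0 : ℝ) 1, p ^ (y + n) * (-Real.log p) ^ (s - 1))
      (∫ p in Ioo (0 : ℝ) 1, ∑' n : ℕ, p ^ (y + n) * (-Real.log p) ^ (s - 1)) := by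
    refine hasSum_integral_of_summable_integral_norm
      (fun n ↦ integrableOn_rpow_mul_neg_log_rpow hs' (hyn n)) ?_
    simpa only [hnorm] using (summable_add_natCast_add_one_rpow_neg hs hy).mul_left (Real.Gamma s)
  convert! hsum using 1
  · exact funext fun n ↦ (integral_rpow_mul_neg_log_rpow hs' (hyn n)).symm
  · exact setIntegral_congr_fun measurableSet_Ioo fun p hp ↦
      ((hasSum_rpow_add_natCast hp y).mul_right _).tsum_eq.symm

theorem hasSum_zetaS {s : ℝ} (hs : 1 < s) :
    HasSum (fun n : ℕ ↦ ((n : ℝ) + 1) ^ (-s)) (zetaS s) := by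
  have hsummable := summable_add_natCast_add_one_rpow_neg hs (y := 0) (by norm_num)
  simp only [zero_add] at hsummable
  exact hsummable.hasSum

theorem zetaS_pos {s : ℝ} (hs : 1 < s) : 0 < zetaS s :=
  (hasSum_zetaS hs).summable.tsum_pos (fun _ ↦ by positivity) 0 (by simp)

/-- The density `f` on `(0, 1)` that mixes the Geometric(`p`) distributions into the Zeta(`s`)
distribution when `s > 1`; the values for other `s` or `p` are junk. -/
noncomputable def geometricMixingDensity (s p : ℝ) : ℝ :=
  (-Real.log p) ^ (s - 1) / (zetaS s * Real.Gamma s * (1 - p))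

theorem hasSum_moment_geometricMixingDensity {s y : ℝ} (hs : 1 < s) (hy : -1 < y) :
    HasSum (fun n : ℕ ↦ (y + n + 1) ^ (-s) / zetaS s)
      (∫ p in Ioo (0 : ℝ) 1, p ^ y * geometricMixingDensity s p) := by
  have hΓ : Real.Gamma s ≠ 0 := (Real.Gamma_pos_of_pos (by linarith)).ne'
  convert! (hasSum_integral_rpow_div_one_sub_mul_neg_log_rpow hs hy).div_const
    (zetaS s * Real.Gamma s) using 1
  · funext n
    rw [mul_comm (zetaS s), mul_div_mul_left _ _ hΓ]
  · rw [← integral_div]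
    congr with p
    rw [geometricMixingDensity, mul_comm (zetaS s * Real.Gamma s), ← div_div]
    ring

theorem moment_zero_geometricMixingDensity {s : ℝ} (hs : 1 < s) :
    ∫ p in Ioo (0 : ℝ) 1, p ^ (0 : ℝ) * geometricMixingDensity s p = 1 := by
  have hmoment := hasSum_moment_geometricMixingDensity hs (y := 0) (by norm_num)
  simp only [zero_add] at hmoment
  rw [hmoment.unique ((hasSum_zetaS hs).div_const _), div_self (zetaS_pos hs).ne']

theorem moment_geometricMixingDensity_add_one {s y : ℝ} (hs : 1 < s) (hy : -1 < y) :
    ∫ p in Ioo (0 : ℝ) 1, p ^ (y + 1) * geometricMixingDensity s p =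
      (∫ p in Ioo (0 : ℝ) 1, p ^ y * geometricMixingDensity s p) - (y + 1) ^ (-s) / zetaS s := by
  have htail := (hasSum_nat_add_iff' 1).2 (hasSum_moment_geometricMixingDensity hs hy)
  refine (hasSum_moment_geometricMixingDensity hs (by linarith)).unique ?_
  convert! htail using 4 with n
  · push_cast
    ring
  · simp

theorem geometric_mixing_density_moment_recursion_general (s : ℝ) (hs : 1 < s) (x : ℝ)
    (hx : -1 < x) :
    (∫ p in Ioo (0 : ℝ) 1, p ^ (x + 1) * geometricMixingDensity s p =
      (∫ p in Ioo (0 : ℝ) 1, p ^ x * geometricMixingDensity s p) - (x + 1) ^ (-s) / zetaS s) ∧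
    ∫ p in Ioo (0 : ℝ) 1, p ^ (0 : ℝ) * geometricMixingDensity s p = 1 :=
  ⟨moment_geometricMixingDensity_add_one hs hx, moment_zero_geometricMixingDensity hs⟩

end

/-- The moments of the Geometric mixing density
`f(p) = (-ln p)^(s-1)/(ζ(s)Γ(s)(1-p))` satisfy the recursion
`E[p^{x+1}] = E[p^x] - (x+1)^(-s)/ζ(s)`, with `E[p^0] = 1`. -/
theorem geometric_mixing_density_moment_recursion (s : ℝ) (hs : 1 < s) (x : ℕ) :
    (∫ p in Set.Ioo (0 : ℝ) 1,
        p ^ (x + 1) * ((-Real.log p) ^ (s - 1) / (zetaS s * Real.Gamma s * (1 - p)))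
      = (∫ p in Set.Ioo (0 : ℝ) 1,
          p ^ x * ((-Real.log p) ^ (s - 1) / (zetaS s * Real.Gamma s * (1 - p))))
        - ((x : ℝ) + 1) ^ (-s) / zetaS s) ∧
    ∫ p in Set.Ioo (0 : ℝ) 1,
        p ^ (0 : ℕ) * ((-Real.log p) ^ (s - 1) / (zetaS s * Real.Gamma s * (1 - p)))
      = 1 := by
  exact_mod_cast geometric_mixing_density_moment_recursion_general s hs x
    (neg_one_lt_zero.trans_le x.cast_nonneg)
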